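/- The first sign change of d₂(x) = π₂(x) − C₂·Li₂(x) occurs at the twin prime pair (1369391, 1369393): the numbers 1369391 and 1369393 are both prime, π₂(x) < C₂·Li₂(x) for every real x with 2 < x < 1369393, and π₂(1369393) > C₂·Li₂(1369393). -/

import Mathlib

open Real Filter Set

/-- `Li₂(x) = ∫₂ˣ dt/(log t)²`. -/
noncomputable def Li2 (x : ℝ) : ℝ := ∫ t in (2:ℝ)..x, 1 / (Real.log t) ^ 2

/-- `π₂(x)`: the number of primes `p` with `p+2` also prime and `p+2 ≤ x`. -/
noncomputable def piTwin (x : ℝ) : ℕ :=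
  Nat.card {p : ℕ | p.Prime ∧ (p + 2).Prime ∧ ((p : ℝ) + 2) ≤ x}

/-- The twin prime constant `C₂ = 2·∏_{p prime, p>2} (1 − 1/(p−1)²)`. -/
noncomputable def C2 : ℝ :=
  2 * ∏' p : {p : ℕ // p.Prime ∧ 2 < p}, (1 - 1 / (((p : ℕ) : ℝ) - 1) ^ 2)

/-- `d₂(x) = π₂(x) − C₂·Li₂(x)`. -/
noncomputable def d2 (x : ℝ) : ℝ := (piTwin x : ℝ) - C2 * Li2 x

/-! ### Part 1: the twin prime constant -/

/-- Local factor after dividing by `1 - 1/p^2`. -/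
noncomputable def gfac (n : ℕ) : ℝ :=
  if n.Prime ∧ 2 < n then 1 - (2 * (n:ℝ) - 1) / (((n:ℝ) - 1) ^ 3 * ((n:ℝ) + 1)) else 1

theorem gfac_le_one (n : ℕ) : gfac n ≤ 1 := by
  unfold gfac
  split_ifs with h
  · have : (2:ℝ) < n := by exact_mod_cast h.2
    have : 0 ≤ (2 * (n:ℝ) - 1) / (((n:ℝ) - 1) ^ 3 * ((n:ℝ) + 1)) := by
      apply div_nonneg (by linarith)
      have : 0 < (n:ℝ) - 1 := by linarith
      positivity
    linarith
  · exact le_refl _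

theorem gfac_ge (n : ℕ) (hn : 3 ≤ n) :
    1 - (1 / ((n:ℝ) - 2) ^ 2 - 1 / ((n:ℝ) - 1) ^ 2) ≤ gfac n := by
  have h3 : (3:ℝ) ≤ n := by exact_mod_cast hn
  obtain ⟨x, hx⟩ : ∃ x : ℝ, x = (n:ℝ) - 3 := ⟨_, rfl⟩
  have hx0 : 0 ≤ x := by linarith
  have hn' : (n:ℝ) = x + 3 := by linarith
  unfold gfac
  rw [hn']
  split_ifs with h
  · have : (2 * (x+3) - 1) / ((x + 3 - 1) ^ 3 * (x + 3 + 1)) ≤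
      1 / (x + 3 - 2) ^ 2 - 1 / (x + 3 - 1) ^ 2 := by
      have b1 : 0 < x + 3 - 2 := by linarith
      have b2 : 0 < x + 3 - 1 := by linarith
      rw [div_sub_div _ _ (by positivity) (by positivity), div_le_div_iff₀]
      · rw [show x + 3 - 1 = x + 2 by ring, show x + 3 - 2 = x + 1 by ring]
        have : 0 ≤ x * x := by positivity
        have hx2 : 0 ≤ (x+2)^2 := by positivity
        have key : (2 * (x + 3) - 1) * (x + 1) ^ 2 ≤ (2*x+3) * (x+2) * (x+3+1) := by
          nlinarith [mul_nonneg hx0 hx0, mul_nonneg (mul_nonneg hx0 hx0) hx0]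
        nlinarith [mul_le_mul_of_nonneg_left key hx2]
      · have : 0 < x + 3 - 1 := by linarith
        positivity
      · have : 0 < x + 3 - 1 := by linarith
        have : 0 < x + 3 - 2 := by linarith
        positivity
    linarith
  · have : 1 / (x + 3 - 1) ^ 2 ≤ 1 / (x + 3 - 2) ^ 2 := by
      apply one_div_le_one_div_of_le
      · have : 0 < x + 3 - 2 := by linarith
        positivity
      · apply pow_le_pow_left₀ <;> linarith
    linarith

theorem gfac_nonneg (n : ℕ) : 0 ≤ gfac n := by
  by_cases h : 3 ≤ n
  · refine le_trans ?_ (gfac_ge n h)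
    have h3 : (3:ℝ) ≤ n := by exact_mod_cast h
    have h1 : 1 / ((n:ℝ) - 2) ^ 2 ≤ 1 := by
      rw [div_le_one (by have : 0 < (n:ℝ) - 2 := by linarith
                         positivity)]
      nlinarith
    have h2 : 0 ≤ 1 / ((n:ℝ) - 1) ^ 2 := by positivity
    linarith
  · unfold gfac
    rw [if_neg (by omega)]
    norm_num

theorem gprod_upper (N M : ℕ) (h : N ≤ M) :
    ∏ n ∈ Finset.range M, gfac n ≤ ∏ n ∈ Finset.range N, gfac n := by
  induction M, h using Nat.le_induction with
  | base => exact le_refl _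
  | succ M hM ih =>
    rw [Finset.prod_range_succ]
    have h0 : 0 ≤ ∏ n ∈ Finset.range M, gfac n := Finset.prod_nonneg (fun i _ => gfac_nonneg i)
    nlinarith [gfac_le_one M]

theorem gprod_lower (N M : ℕ) (h : N ≤ M) (hN : 4 ≤ N) :
    (∏ n ∈ Finset.range N, gfac n) * (1 - 1 / ((N:ℝ) - 2) ^ 2 + 1 / ((M:ℝ) - 2) ^ 2) ≤
      ∏ n ∈ Finset.range M, gfac n := by
  induction M, h using Nat.le_induction with
  | base => simp
  | succ M hM ih =>
    rw [Finset.prod_range_succ]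
    have h0 : 0 ≤ ∏ n ∈ Finset.range N, gfac n := Finset.prod_nonneg (fun i _ => gfac_nonneg i)
    have hN' : (4:ℝ) ≤ N := by exact_mod_cast hN
    have hM' : (N:ℝ) ≤ M := by exact_mod_cast hM
    have hg := gfac_ge M (by omega)
    have e : ((M + 1 : ℕ) : ℝ) - 2 = (M:ℝ) - 1 := by push_cast; ring
    rw [e]
    set P := ∏ n ∈ Finset.range N, gfac n
    set a := 1 / ((N:ℝ) - 2) ^ 2
    set b := 1 / ((M:ℝ) - 2) ^ 2 with hb
    set c := 1 / ((M:ℝ) - 1) ^ 2 with hc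
    have hba : b ≤ a := by
      apply one_div_le_one_div_of_le
      · have : 0 < (N:ℝ) - 2 := by linarith
        positivity
      · apply pow_le_pow_left₀ <;> linarith
    have hcb : c ≤ b := by
      apply one_div_le_one_div_of_le
      · have : 0 < (M:ℝ) - 2 := by linarith
        positivity
      · apply pow_le_pow_left₀ <;> linarith
    have ha1 : a ≤ 1 := by
      rw [div_le_one (by have : 0 < (N:ℝ) - 2 := by linarith
                         positivity)]
      nlinarith
    have hc0 : 0 ≤ c := by positivity
    have h1 : P * (1 - a + c) ≤ P * (1 - a + b) * (1 - (b - c)) := by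
      rw [mul_assoc]
      apply mul_le_mul_of_nonneg_left _ h0
      nlinarith [mul_nonneg (sub_nonneg.2 hcb) (sub_nonneg.2 hba)]
    have h2 : P * (1 - a + b) * (1 - (b - c)) ≤ P * (1 - a + b) * gfac M :=
      mul_le_mul_of_nonneg_left hg (mul_nonneg h0 (by linarith))
    have h3 : P * (1 - a + b) * gfac M ≤ (∏ n ∈ Finset.range M, gfac n) * gfac M :=
      mul_le_mul_of_nonneg_right ih (gfac_nonneg M)
    linarith

/-- the factor of the twin prime constant, extended by `1`. -/
noncomputable def ffac (n : ℕ) : ℝ :=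
  if n.Prime ∧ 2 < n then 1 - 1 / ((n:ℝ) - 1) ^ 2 else 1

/-- the Euler factor of `1/ζ(2)`. -/
noncomputable def zfac (n : ℕ) : ℝ := if n.Prime then 1 - 1 / (n:ℝ) ^ 2 else 1

theorem ffac_eq (n : ℕ) (hn : n ≠ 2) : ffac n = zfac n * gfac n := by
  unfold ffac zfac gfac
  by_cases h : n.Prime
  · have h2 : 2 < n := lt_of_le_of_ne h.two_le (Ne.symm hn)
    have h2' : (2:ℝ) < n := by exact_mod_cast h2
    rw [if_pos ⟨h, h2⟩, if_pos h, if_pos ⟨h, h2⟩]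
    have a1 : (n:ℝ) ≠ 0 := by linarith
    have a2 : (n:ℝ) - 1 ≠ 0 := by linarith
    have a3 : (n:ℝ) + 1 ≠ 0 := by linarith
    field_simp
    ring
  · simp [h]

theorem fprod_eq (M : ℕ) (hM : 3 ≤ M) : ∏ n ∈ Finset.range M, ffac n =
    (4/3) * (∏ n ∈ Finset.range M, zfac n) * ∏ n ∈ Finset.range M, gfac n := by
  induction M, hM using Nat.le_induction with
  | base =>
    simp only [Finset.prod_range_succ, Finset.prod_range_zero, ffac, zfac, gfac]
    norm_num [Nat.not_prime_zero, Nat.not_prime_one, Nat.prime_two]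
  | succ M hM ih =>
    rw [Finset.prod_range_succ, Finset.prod_range_succ, Finset.prod_range_succ, ih,
      ffac_eq M (by omega)]
    ring

theorem zprod_tendsto : Tendsto (fun M : ℕ => ∏ n ∈ Finset.range M, zfac n) atTop
    (nhds (6 / π ^ 2)) := by
  have h := riemannZeta_eulerProduct (s := 2) (by norm_num)
  rw [riemannZeta_two] at h
  have h1 : (fun n : ℕ => ∏ p ∈ n.primesBelow, (1 - (p:ℂ) ^ (-(2:ℂ)))⁻¹) =
      fun M : ℕ => (((∏ n ∈ Finset.range M, zfac n)⁻¹ : ℝ) : ℂ) := by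
    funext M
    rw [Nat.primesBelow, Finset.prod_filter, ← Finset.prod_inv_distrib, Complex.ofReal_prod]
    apply Finset.prod_congr rfl
    intro p _
    unfold zfac
    split_ifs with hp
    · rw [Complex.cpow_neg]
      push_cast
      rw [show (2:ℂ) = ((2:ℕ):ℂ) by norm_num, Complex.cpow_natCast]
      simp
    · simp
  rw [h1] at h
  have h2 : ((π:ℂ) ^ 2 / 6) = (((π ^ 2 / 6 : ℝ)) : ℂ) := by push_cast; rfl
  rw [h2] at h
  have h3 := (Complex.continuous_re.tendsto _).comp h
  simp only [Function.comp_def, Complex.ofReal_re] at h3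
  have h4 := h3.inv₀ (by positivity)
  simpa using h4

theorem ffac_tendsto : Tendsto (fun M : ℕ => ∏ n ∈ Finset.range M, ffac n) atTop
    (nhds (C2 / 2)) := by
  have e : C2 / 2 = ∏' n, ffac n := by
    unfold C2
    rw [mul_div_cancel_left₀ _ (by norm_num)]
    have := tprod_subtype {p : ℕ | p.Prime ∧ 2 < p} (fun n : ℕ => 1 - 1 / ((n:ℝ) - 1) ^ 2)
    refine this.trans ?_
    apply tprod_congr
    intro n
    unfold ffac
    rw [Set.mulIndicator_apply]
    rfl
  rw [e]
  apply HasProd.tendsto_prod_nat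
  apply Multipliable.hasProd
  have hs : Summable (fun n : ℕ => ffac n - 1) := by
    have h1 : Summable (fun n : ℕ => 4 * (1 / (n:ℝ) ^ 2)) :=
      (Real.summable_one_div_nat_pow.2 (by norm_num)).mul_left 4
    refine Summable.of_norm_bounded h1 ?_
    intro n
    unfold ffac
    split_ifs with h
    · have h2 : (2:ℝ) < n := by exact_mod_cast h.2
      have h3 : (1 - 1 / ((n:ℝ) - 1) ^ 2) - 1 = - (1 / ((n:ℝ) - 1) ^ 2) := by ring
      rw [h3, norm_neg, Real.norm_of_nonneg (by positivity), mul_one_div,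
        div_le_div_iff₀ (by have : 0 < (n:ℝ) - 1 := by linarith
                            positivity) (by positivity)]
      nlinarith
    · simp
  have := Real.multipliable_one_add_of_summable hs
  simpa using this

/-- Trial division test, valid below 625. -/
def isP (n : ℕ) : Bool := Nat.ble 2 n && (List.range 25).all
  (fun m => Nat.ble m 1 || Nat.ble n m || !(Nat.beq (Nat.mod n m) 0))

theorem isP_iff (n : ℕ) (hn : n < 625) : isP n = true ↔ n.Prime := by
  unfold isP
  simp only [Bool.and_eq_true, Nat.ble_eq, List.all_eq_true, List.mem_range, Bool.or_eq_true,
    Bool.not_eq_true', ← Bool.not_eq_true, Nat.beq_eq]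
  constructor
  · rintro ⟨h2, h⟩
    by_contra hp
    have hq := Nat.minFac_prime (n := n) (by omega)
    have hsq := Nat.minFac_sq_le_self (n := n) (by omega) hp
    have hlt : n.minFac < 25 := by nlinarith
    have hd := Nat.minFac_dvd n
    have hne : n.minFac ≠ n := fun e => hp (e ▸ hq)
    have hle := Nat.minFac_le (n := n) (by omega)
    rcases h _ hlt with (h | h) | h
    · have := hq.two_le; omega
    · omega
    · exact h (Nat.mod_eq_zero_of_dvd hd)
  · intro hp
    refine ⟨hp.two_le, ?_⟩
    intro m _
    by_cases h1 : m ≤ 1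
    · exact Or.inl (Or.inl h1)
    by_cases h2 : n ≤ m
    · exact Or.inl (Or.inr h2)
    right
    intro h
    rcases (Nat.dvd_prime hp).1 (Nat.dvd_of_mod_eq_zero h) with h | h <;> omega

/-- Numerator of the finite product. -/
def numF : ℕ → ℕ
  | 0 => 1
  | n+1 => bif isP n && Nat.ble 3 n then numF n * (n^3 * (n-2)) else numF n

/-- Denominator of the finite product. -/
def denF : ℕ → ℕ
  | 0 => 1
  | n+1 => bif isP n && Nat.ble 3 n then denF n * ((n-1)^3 * (n+1)) else denF n

theorem denF_pos (N : ℕ) : 0 < denF N := by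
  induction N with
  | zero => simp [denF]
  | succ n ih =>
    rw [denF]
    by_cases h : (isP n && Nat.ble 3 n) = true
    · rw [h]
      simp only [Bool.and_eq_true, Nat.ble_eq] at h
      have : 0 < n - 1 := by omega
      simp only [cond_true]
      positivity
    · rw [Bool.not_eq_true] at h
      rw [h]; exact ih

theorem gprod_eq (N : ℕ) (hN : N ≤ 625) :
    (∏ n ∈ Finset.range N, gfac n) * denF N = numF N := by
  induction N with
  | zero => simp [numF, denF]
  | succ n ih =>
    have ih := ih (by omega)
    rw [Finset.prod_range_succ, denF, numF]
    have hP := isP_iff n (by omega)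
    by_cases h : (isP n && Nat.ble 3 n) = true
    · rw [h]
      simp only [Bool.and_eq_true, Nat.ble_eq, hP] at h
      simp only [cond_true]
      have hg : gfac n = 1 - (2 * (n:ℝ) - 1) / (((n:ℝ) - 1) ^ 3 * ((n:ℝ) + 1)) := by
        unfold gfac
        rw [if_pos ⟨h.1, by omega⟩]
      rw [hg]
      have h3 : (3:ℝ) ≤ n := by exact_mod_cast h.2
      push_cast [Nat.cast_sub (show 1 ≤ n by omega), Nat.cast_sub (show 2 ≤ n by omega)]
      rw [← ih]
      have a2 : (n:ℝ) - 1 ≠ 0 := by linarith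
      have a3 : (n:ℝ) + 1 ≠ 0 := by linarith
      field_simp
      ring
    · have h' : ¬ (n.Prime ∧ 2 < n) := by
        rintro ⟨h1, h2⟩
        apply h
        simp only [Bool.and_eq_true, Nat.ble_eq, hP]
        exact ⟨h1, h2⟩
      rw [Bool.not_eq_true] at h
      rw [h]
      have hg : gfac n = 1 := by
        unfold gfac
        rw [if_neg h']
      rw [hg, mul_one]
      exact ih

set_option maxRecDepth 10000 in
theorem num_lower : denF 602 * 8144423 < numF 602 * 10000000 := by decide +kernel

set_option maxRecDepth 10000 in
theorem num_upper : numF 602 * 10000000 < denF 602 * 8144424 := by decide +kernel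

theorem C2_bounds : 1.32032 ≤ C2 ∧ C2 ≤ 1.32033 := by
  obtain ⟨N, hN⟩ : ∃ N : ℕ, N = 602 := ⟨_, rfl⟩
  have hl0 := num_lower
  have hu0 := num_upper
  rw [← hN] at hl0 hu0
  obtain ⟨G, hG⟩ : ∃ G : ℝ, G = ∏ n ∈ Finset.range N, gfac n := ⟨_, rfl⟩
  have hd : (0:ℝ) < denF N := by exact_mod_cast denF_pos N
  have he : G * denF N = numF N := by
    rw [hG]
    exact gprod_eq N (by omega)
  have hl : (denF N : ℝ) * 8144423 < numF N * 10000000 := by exact_mod_cast hl0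
  have hu : (numF N : ℝ) * 10000000 < denF N * 8144424 := by exact_mod_cast hu0
  have hGl : 0.8144423 ≤ G := by
    by_contra hc
    push Not at hc
    nlinarith
  have hGu : G ≤ 0.8144424 := by
    by_contra hc
    push Not at hc
    nlinarith
  have hz := zprod_tendsto
  have hf := ffac_tendsto
  have hz0 : ∀ M, 0 ≤ ∏ n ∈ Finset.range M, zfac n := by
    intro M
    apply Finset.prod_nonneg
    intro n _
    unfold zfac
    split_ifs with h
    · have : (2:ℝ) ≤ n := by exact_mod_cast h.two_le
      rw [sub_nonneg, div_le_one (by positivity)]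
      nlinarith
    · norm_num
  have hpi := Real.pi_gt_d6
  have hpi' := Real.pi_lt_d6
  have hp0 : 0 < π ^ 2 := by positivity
  have hp1 : (3.141592:ℝ) ^ 2 ≤ π ^ 2 := pow_le_pow_left₀ (by norm_num) hpi.le 2
  have hp2 : π ^ 2 ≤ (3.141593:ℝ) ^ 2 := pow_le_pow_left₀ (by positivity) hpi'.le 2
  constructor
  · have h1 : (4/3) * (6 / π ^ 2) * (G * (1 - 1 / 360000)) ≤ C2 / 2 := by
      refine le_of_tendsto_of_tendsto ((hz.const_mul (4/3)).mul_const _) hf ?_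
      filter_upwards [eventually_ge_atTop 602] with M hM
      rw [fprod_eq M (by omega)]
      apply mul_le_mul_of_nonneg_left _ (mul_nonneg (by norm_num) (hz0 M))
      refine le_trans ?_ (gprod_lower N M (by omega) (by omega))
      rw [← hG]
      apply mul_le_mul_of_nonneg_left _ (by linarith)
      have : 0 ≤ 1 / ((M:ℝ) - 2) ^ 2 := by positivity
      rw [hN]
      have e : 1 / (((602:ℕ):ℝ) - 2) ^ 2 = 1 / 360000 := by norm_num
      rw [e]
      linarith
    have h2 : 6 / (3.141593:ℝ) ^ 2 ≤ 6 / π ^ 2 := by gcongr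
    have h3 : (4/3) * (6 / (3.141593:ℝ) ^ 2) * (0.8144423 * (1 - 1 / 360000)) ≤
        (4/3) * (6 / π ^ 2) * (G * (1 - 1 / 360000)) := by gcongr
    have h4 : (1.32032:ℝ) / 2 ≤ (4/3) * (6 / (3.141593:ℝ) ^ 2) * (0.8144423 * (1 - 1 / 360000)) := by
      norm_num
    linarith
  · have h1 : C2 / 2 ≤ (4/3) * (6 / π ^ 2) * G := by
      refine le_of_tendsto_of_tendsto hf ((hz.const_mul (4/3)).mul_const _) ?_
      filter_upwards [eventually_ge_atTop 602] with M hM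
      rw [fprod_eq M (by omega)]
      apply mul_le_mul_of_nonneg_left _ (mul_nonneg (by norm_num) (hz0 M))
      rw [hG]
      exact gprod_upper N M (by omega)
    have h2 : 6 / π ^ 2 ≤ 6 / (3.141592:ℝ) ^ 2 := by gcongr
    have h3 : (4/3) * (6 / π ^ 2) * G ≤ (4/3) * (6 / (3.141592:ℝ) ^ 2) * 0.8144424 := by gcongr
    have h4 : (4/3) * (6 / (3.141592:ℝ) ^ 2) * 0.8144424 ≤ (1.32033:ℝ) / 2 := by
      norm_num
    linarith


/-! ### Part 2: the logarithmic integral -/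

/-- Truncated exponential series. -/
noncomputable def PK (u : ℝ) : ℝ := ∑ i ∈ Finset.range 61, u ^ i / (i.factorial : ℝ)

/-- Truncated series occurring in the antiderivative. -/
noncomputable def SK (u : ℝ) : ℝ :=
  ∑ j ∈ Finset.range 59, u ^ (j+1) / (((j+1 : ℕ) : ℝ) * ((j+2).factorial : ℝ))

/-- Approximate antiderivative of `exp u / u^2`. -/
noncomputable def GK (u : ℝ) : ℝ := -1 / u + Real.log u + SK u

theorem PK_le_exp {u : ℝ} (hu : 0 ≤ u) : PK u ≤ Real.exp u := Real.sum_le_exp_of_nonneg hu 61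

theorem exp_le_PK {u : ℝ} (hu : 0 ≤ u) (hu' : u ≤ 15) :
    (1 - 1 / 10 ^ 10) * Real.exp u ≤ PK u := by
  have h := Complex.exp_bound' (x := (u:ℂ)) (n := 61) (by
    rw [Complex.norm_real, Real.norm_of_nonneg hu]
    rw [div_le_div_iff₀ (by positivity) (by norm_num)]
    push_cast
    linarith)
  rw [Complex.norm_real, Real.norm_of_nonneg hu] at h
  have e : Complex.exp (u:ℂ) - ∑ m ∈ Finset.range 61, (u:ℂ) ^ m / (m.factorial : ℂ) =
      ((Real.exp u - PK u : ℝ) : ℂ) := by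
    unfold PK
    push_cast
    rfl
  rw [e, Complex.norm_real] at h
  have h1 := le_trans (le_abs_self _) h
  have h2 : u ^ 61 ≤ 15 ^ 61 := pow_le_pow_left₀ hu hu' 61
  have h3 : u ^ 61 / ((61).factorial : ℝ) * 2 ≤ 1 / 10 ^ 10 := by
    have h4 : u ^ 61 / ((61).factorial : ℝ) ≤ 15 ^ 61 / ((61).factorial : ℝ) := by gcongr
    have h5 : (15:ℝ) ^ 61 / ((61).factorial : ℝ) * 2 ≤ 1 / 10 ^ 10 := by
      norm_num [Nat.factorial]
    linarith
  have h6 : 1 ≤ Real.exp u := Real.one_le_exp hu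
  have h7 : Real.exp u - PK u ≤ 1 / 10 ^ 10 * Real.exp u := by
    have : (1:ℝ) / 10 ^ 10 * 1 ≤ 1 / 10 ^ 10 * Real.exp u := by gcongr
    linarith
  linarith

theorem PK_split (J : ℕ) (u : ℝ) : ∑ i ∈ Finset.range (J+2), u ^ i / (i.factorial : ℝ) =
    1 + u + u ^ 2 * ∑ j ∈ Finset.range J, u ^ j / ((j+2).factorial : ℝ) := by
  rw [Finset.sum_range_succ', Finset.sum_range_succ', Finset.mul_sum]
  have : ∑ k ∈ Finset.range J, u ^ (k + 1 + 1) / ((k + 1 + 1).factorial : ℝ) =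
      ∑ j ∈ Finset.range J, u ^ 2 * (u ^ j / ((j+2).factorial : ℝ)) := by
    apply Finset.sum_congr rfl
    intro j _
    rw [pow_add, pow_add]
    ring
  rw [this]
  simp
  ring

theorem SK_hasDerivAt (u : ℝ) :
    HasDerivAt SK (∑ j ∈ Finset.range 59, u ^ j / ((j+2).factorial : ℝ)) u := by
  unfold SK
  apply HasDerivAt.fun_sum
  intro j _
  have h := (hasDerivAt_pow (j+1) u).div_const (((j+1 : ℕ) : ℝ) * ((j+2).factorial : ℝ))
  refine h.congr_deriv ?_
  have h1 : ((j+1 : ℕ) : ℝ) ≠ 0 := by positivity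
  have h2 : ((j+2).factorial : ℝ) ≠ 0 := by positivity
  rw [Nat.add_sub_cancel]
  field_simp

theorem GK_hasDerivAt {u : ℝ} (hu : 0 < u) : HasDerivAt GK (PK u / u ^ 2) u := by
  have h1 := ((hasDerivAt_inv hu.ne').neg.add (Real.hasDerivAt_log hu.ne')).add (SK_hasDerivAt u)
  have e : GK = (-(fun y : ℝ => y⁻¹) + Real.log) + SK := by
    funext v
    simp [GK, neg_div]
  rw [e]
  refine h1.congr_deriv ?_
  unfold PK
  rw [PK_split 59]
  field_simp

theorem GKlog_hasDerivAt {x : ℝ} (hx : 1 < x) :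
    HasDerivAt (fun y => GK (Real.log y)) (PK (Real.log x) / (Real.log x) ^ 2 * x⁻¹) x :=
  (GK_hasDerivAt (Real.log_pos hx)).comp x (Real.hasDerivAt_log (by linarith))

theorem PK_continuous : Continuous PK := by
  unfold PK
  fun_prop

theorem log_contOn {a b : ℝ} (ha : 1 < a) (hb : 1 < b) :
    ContinuousOn Real.log (Set.uIcc a b) := by
  intro x hx
  have : 1 < x := lt_of_lt_of_le (lt_min ha hb) hx.1
  exact (Real.continuousAt_log (by linarith)).continuousWithinAt

theorem integrand_int {a b : ℝ} (ha : 1 < a) (hb : 1 < b) :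
    IntervalIntegrable (fun t : ℝ => 1 / (Real.log t) ^ 2) MeasureTheory.volume a b := by
  apply ContinuousOn.intervalIntegrable
  apply ContinuousOn.div continuousOn_const ((log_contOn ha hb).pow 2)
  intro x hx
  have : 1 < x := lt_of_lt_of_le (lt_min ha hb) hx.1
  exact pow_ne_zero 2 (Real.log_pos this).ne'

theorem approx_int {a b : ℝ} (ha : 1 < a) (hb : 1 < b) :
    IntervalIntegrable (fun t : ℝ => PK (Real.log t) / (Real.log t) ^ 2 * t⁻¹)
      MeasureTheory.volume a b := by
  apply ContinuousOn.intervalIntegrable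
  have h1 : ∀ x ∈ Set.uIcc a b, 1 < x := fun x hx => lt_of_lt_of_le (lt_min ha hb) hx.1
  apply ContinuousOn.mul
  · apply ContinuousOn.div
    · exact PK_continuous.comp_continuousOn (log_contOn ha hb)
    · exact (log_contOn ha hb).pow 2
    · intro x hx
      exact pow_ne_zero 2 (Real.log_pos (h1 x hx)).ne'
  · apply ContinuousOn.inv₀ continuousOn_id
    intro x hx
    have := h1 x hx
    simp only [id]
    linarith

theorem approx_integral {b : ℝ} (hb : 2 ≤ b) :
    ∫ t in (2:ℝ)..b, PK (Real.log t) / (Real.log t) ^ 2 * t⁻¹ =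
      GK (Real.log b) - GK (Real.log 2) := by
  apply intervalIntegral.integral_eq_sub_of_hasDerivAt
    (f := fun y => GK (Real.log y))
  · intro x hx
    rw [Set.uIcc_of_le hb] at hx
    exact GKlog_hasDerivAt (by linarith [hx.1])
  · exact approx_int (by norm_num) (by linarith)

theorem Li2_lower {b : ℝ} (hb : 2 ≤ b) : GK (Real.log b) - GK (Real.log 2) ≤ Li2 b := by
  rw [← approx_integral hb]
  unfold Li2
  apply intervalIntegral.integral_mono_on hb (approx_int (by norm_num) (by linarith))
    (integrand_int (by norm_num) (by linarith))
  intro x hx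
  have hx1 : 1 < x := by linarith [hx.1]
  have hl := Real.log_pos hx1
  have h := PK_le_exp hl.le
  rw [Real.exp_log (by linarith)] at h
  rw [div_mul_eq_mul_div, div_le_div_iff_of_pos_right (by positivity)]
  rw [← div_eq_mul_inv, div_le_one (by linarith)]
  exact h

theorem Li2_upper {b : ℝ} (hb : 2 ≤ b) (hb' : Real.log b ≤ 15) :
    (1 - 1 / 10 ^ 10) * Li2 b ≤ GK (Real.log b) - GK (Real.log 2) := by
  rw [← approx_integral hb]
  unfold Li2
  rw [← intervalIntegral.integral_const_mul]
  apply intervalIntegral.integral_mono_on hb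
    ((integrand_int (by norm_num) (by linarith)).const_mul _)
    (approx_int (by norm_num) (by linarith))
  intro x hx
  have hx1 : 1 < x := by linarith [hx.1]
  have hl := Real.log_pos hx1
  have hl' : Real.log x ≤ Real.log b := Real.log_le_log (by linarith) hx.2
  have h := exp_le_PK hl.le (by linarith)
  rw [Real.exp_log (by linarith)] at h
  rw [mul_one_div, div_mul_eq_mul_div, div_le_div_iff_of_pos_right (by positivity)]
  rw [← div_eq_mul_inv, le_div_iff₀ (by linarith)]
  exact h

theorem Li2_mono {a b : ℝ} (ha : 2 ≤ a) (hab : a ≤ b) : Li2 a ≤ Li2 b := by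
  unfold Li2
  have h := intervalIntegral.integral_add_adjacent_intervals (a := 2) (b := a) (c := b)
    (integrand_int (by norm_num) (by linarith)) (integrand_int (by linarith) (by linarith))
  have : 0 ≤ ∫ t in a..b, 1 / (Real.log t) ^ 2 :=
    intervalIntegral.integral_nonneg hab (fun x _ => by positivity)
  linarith

theorem Li2_pos {b : ℝ} (hb : 2 < b) : 0 < Li2 b := by
  unfold Li2
  apply intervalIntegral.intervalIntegral_pos_of_pos_on
    (integrand_int (by norm_num) (by linarith)) _ hb
  intro x hx
  have := Real.log_pos (show 1 < x by linarith [hx.1])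
  positivity

/-! #### Integer evaluation of the series -/

/-- Numerator of the truncated exponential series at `m / 10^8`. -/
def pe (m : ℕ) : ℕ → ℕ
  | 0 => 1
  | k+1 => Nat.add (Nat.mul (pe m k) (Nat.mul 100000000 (Nat.add k 1))) (Nat.pow m (Nat.add k 1))

/-- Denominator for `pe`. -/
def dE (k : ℕ) : ℕ := Nat.mul (Nat.pow 100000000 k) (Nat.factorial k)

/-- Numerator of the series `SK` at `m / 10^8`. -/
def pg (m : ℕ) : ℕ → ℕ
  | 0 => 0
  | j+1 => Nat.add (Nat.mul (pg m j) (Nat.mul 100000000 (Nat.mul (Nat.add j 2) (Nat.add j 1))))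
      (Nat.mul (Nat.pow m (Nat.add j 1)) (Nat.factorial j))

/-- Denominator for `pg`. -/
def dG (j : ℕ) : ℕ :=
  Nat.mul (Nat.pow 100000000 j) (Nat.mul (Nat.factorial (Nat.add j 1)) (Nat.factorial j))

theorem dE_eq (k : ℕ) : (dE k : ℝ) = 100000000 ^ k * (k.factorial : ℝ) := by
  have : dE k = 100000000 ^ k * k.factorial := rfl
  rw [this]; push_cast; rfl

theorem dG_eq (j : ℕ) : (dG j : ℝ) = 100000000 ^ j * (((j+1).factorial : ℝ) * (j.factorial : ℝ)) := by
  have : dG j = 100000000 ^ j * ((j+1).factorial * j.factorial) := rfl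
  rw [this]; push_cast; rfl

theorem dE_pos (k : ℕ) : (0:ℝ) < dE k := by rw [dE_eq]; positivity

theorem dG_pos (k : ℕ) : (0:ℝ) < dG k := by rw [dG_eq]; positivity

theorem pe_eq (m k : ℕ) : (pe m k : ℝ) =
    dE k * ∑ i ∈ Finset.range (k+1), ((m:ℝ) / 100000000) ^ i / (i.factorial : ℝ) := by
  rw [dE_eq]
  induction k with
  | zero => simp [pe]
  | succ k ih =>
    have h : pe m (k+1) = pe m k * (100000000 * (k+1)) + m ^ (k+1) := rfl
    rw [h, Finset.sum_range_succ, Nat.factorial_succ]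
    push_cast
    rw [ih]
    have h2 : (k.factorial : ℝ) ≠ 0 := by positivity
    have h3 : (k:ℝ) + 1 ≠ 0 := by positivity
    generalize ∑ i ∈ Finset.range (k+1), ((m:ℝ) / 100000000) ^ i / (i.factorial : ℝ) = S
    have e : ((m:ℝ) / 100000000) ^ (k+1) = (m:ℝ) ^ (k+1) / 100000000 ^ (k+1) := div_pow _ _ _
    rw [e]
    have h5 : (100000000:ℝ) ^ (k+1) ≠ 0 := by positivity
    rw [show (100000000:ℝ) ^ k * k.factorial * S * (100000000 * (k+1)) =
      100000000 ^ (k+1) * ((k+1) * k.factorial) * S by rw [pow_succ]; ring]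
    field_simp

theorem pg_eq (m k : ℕ) : (pg m k : ℝ) =
    dG k * ∑ j ∈ Finset.range k, ((m:ℝ) / 100000000) ^ (j+1) /
      (((j+1 : ℕ) : ℝ) * ((j+2).factorial : ℝ)) := by
  rw [dG_eq]
  induction k with
  | zero => simp [pg]
  | succ k ih =>
    have h : pg m (k+1) = pg m k * (100000000 * ((k+2)*(k+1))) + m ^ (k+1) * k.factorial := rfl
    rw [h, Finset.sum_range_succ, Nat.factorial_succ (k+1), Nat.factorial_succ k]
    rw [Nat.factorial_succ k] at ih
    push_cast at ih ⊢
    rw [ih]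
    have h2 : (k.factorial : ℝ) ≠ 0 := by positivity
    have h3 : (k:ℝ) + 1 ≠ 0 := by positivity
    have h4 : (k:ℝ) + 2 ≠ 0 := by positivity
    have h5 : (k:ℝ) + 1 + 1 ≠ 0 := by positivity
    generalize ∑ j ∈ Finset.range k, ((m:ℝ) / 100000000) ^ (j+1) /
      (((j:ℝ)+1) * ((j+2).factorial : ℝ)) = S
    have e : ((m:ℝ) / 100000000) ^ (k+1) = (m:ℝ) ^ (k+1) / 100000000 ^ (k+1) := div_pow _ _ _
    rw [e]
    have h6 : (100000000:ℝ) ^ (k+1) ≠ 0 := by positivity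
    have h7 : (100000000:ℝ) ^ (k+1) = 100000000 ^ k * 100000000 := pow_succ _ _
    have h8 : (100000000:ℝ) ^ (k+1) * (((k:ℝ)+1+1) * (((k:ℝ)+1) * k.factorial) *
        (((k:ℝ)+1) * k.factorial)) * ((m:ℝ) ^ (k+1) / 100000000 ^ (k+1) /
        (((k:ℝ)+1) * (((k:ℝ)+1+1) * (((k:ℝ)+1) * k.factorial)))) = (m:ℝ) ^ (k+1) * k.factorial := by
      field_simp
    rw [mul_add _ S, h8, h7]
    ring

theorem pe_PK (m : ℕ) : (pe m 60 : ℝ) = dE 60 * PK ((m:ℝ) / 100000000) := pe_eq m 60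

theorem pg_SK (m : ℕ) : (pg m 59 : ℝ) = dG 59 * SK ((m:ℝ) / 100000000) := pg_eq m 59

/-- Certified upper bound `exp (m / 10^8) ≤ a / b`. -/
def expUB (m a b : ℕ) : Bool :=
  Nat.ble m 1500000000 && Nat.ble (Nat.mul (pe m 60) (Nat.mul 10000000000 b))
    (Nat.mul 9999999999 (Nat.mul a (dE 60)))

theorem expUB_sound (m a b : ℕ) (hb : 0 < b) (h : expUB m a b = true) :
    Real.exp ((m:ℝ) / 100000000) ≤ (a:ℝ) / b := by
  unfold expUB at h
  simp only [Bool.and_eq_true, Nat.ble_eq] at h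
  obtain ⟨h1, h2⟩ := h
  have h2' : pe m 60 * (10000000000 * b) ≤ 9999999999 * (a * dE 60) := h2
  have h1' : (m:ℝ) ≤ 1500000000 := by exact_mod_cast h1
  have h3 : (pe m 60 : ℝ) * (10000000000 * b) ≤ 9999999999 * (a * dE 60) := by exact_mod_cast h2'
  rw [pe_PK] at h3
  have h4 := exp_le_PK (u := (m:ℝ) / 100000000) (by positivity) (by linarith)
  have hd := dE_pos 60
  have hb' : (0:ℝ) < b := by exact_mod_cast hb
  rw [le_div_iff₀ hb']
  generalize PK ((m:ℝ) / 100000000) = P at *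
  generalize Real.exp ((m:ℝ) / 100000000) = E at *
  generalize (dE 60 : ℝ) = d at *
  have h5 : P * (10000000000 * b) ≤ 9999999999 * a := by
    have : d * (P * (10000000000 * b)) ≤ d * (9999999999 * a) := by linarith
    exact le_of_mul_le_mul_left this hd
  have h6 : (1 - 1 / 10 ^ 10) * E * b ≤ P * b := mul_le_mul_of_nonneg_right h4 hb'.le
  norm_num at h6
  linarith

/-- Certified lower bound `a / b ≤ exp (m / 10^8)`. -/
def expLB (m a b : ℕ) : Bool := Nat.ble (Nat.mul a (dE 60)) (Nat.mul (pe m 60) b)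

theorem expLB_sound (m a b : ℕ) (hb : 0 < b) (h : expLB m a b = true) :
    (a:ℝ) / b ≤ Real.exp ((m:ℝ) / 100000000) := by
  unfold expLB at h
  rw [Nat.ble_eq] at h
  have h2' : a * dE 60 ≤ pe m 60 * b := h
  have h3 : (a:ℝ) * dE 60 ≤ pe m 60 * b := by exact_mod_cast h2'
  rw [pe_PK] at h3
  have h4 := PK_le_exp (u := (m:ℝ) / 100000000) (by positivity)
  have hd := dE_pos 60
  have hb' : (0:ℝ) < b := by exact_mod_cast hb
  rw [div_le_iff₀ hb']
  refine le_trans ?_ (mul_le_mul_of_nonneg_right h4 hb'.le)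
  generalize PK ((m:ℝ) / 100000000) = P at *
  generalize (dE 60 : ℝ) = d at *
  have : d * a ≤ d * (P * b) := by linarith
  exact le_of_mul_le_mul_left this hd

theorem SK_mono {a b : ℝ} (ha : 0 ≤ a) (hab : a ≤ b) : SK a ≤ SK b := by
  unfold SK
  apply Finset.sum_le_sum
  intro j _
  gcongr

theorem cert_log2_a : expUB 36651000 100000000 69314719 = true := by decide +kernel
theorem cert_log2_b : expLB 36652000 100000000 69314718 = true := by decide +kernel
theorem cert_S_a : pg 69314719 59 * 1000000000 ≤ dG 59 * 391766010 := by decide +kernel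
theorem cert_S_b : dG 59 * 391765990 ≤ pg 69314718 59 * 1000000000 := by decide +kernel

theorem GK_log2_bounds : GK (Real.log 2) ≤ -1.417438 ∧ -1.417451 ≤ GK (Real.log 2) := by
  have l1 := Real.log_two_gt_d9
  have l2 := Real.log_two_lt_d9
  have l0 : 0 < Real.log 2 := by linarith
  have a1 := expUB_sound _ _ _ (by norm_num) cert_log2_a
  have a2 := expLB_sound _ _ _ (by norm_num) cert_log2_b
  have hd := dG_pos 59
  have s1 : (pg 69314719 59 : ℝ) * 1000000000 ≤ dG 59 * 391766010 := by exact_mod_cast cert_S_a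
  have s2 : (dG 59 : ℝ) * 391765990 ≤ pg 69314718 59 * 1000000000 := by exact_mod_cast cert_S_b
  rw [pg_SK] at s1 s2
  have t1 : SK (Real.log 2) ≤ SK (((69314719:ℕ):ℝ) / 100000000) :=
    SK_mono l0.le (by push_cast; linarith)
  have t2 : SK (((69314718:ℕ):ℝ) / 100000000) ≤ SK (Real.log 2) :=
    SK_mono (by positivity) (by push_cast; linarith)
  have b1 : Real.log (Real.log 2) ≤ -0.36651 := by
    rw [Real.log_le_iff_le_exp l0, Real.exp_neg]
    push_cast at a1
    rw [show (36651000:ℝ) / 100000000 = 0.36651 by norm_num] at a1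
    rw [le_inv_comm₀ l0 (Real.exp_pos _)]
    refine le_trans a1 ?_
    rw [← one_div, div_le_div_iff₀ (by norm_num) l0]
    linarith
  have b2 : -0.36652 ≤ Real.log (Real.log 2) := by
    rw [Real.le_log_iff_exp_le l0, Real.exp_neg]
    push_cast at a2
    rw [show (36652000:ℝ) / 100000000 = 0.36652 by norm_num] at a2
    rw [inv_le_comm₀ (Real.exp_pos _) l0]
    refine le_trans ?_ a2
    rw [← one_div, div_le_div_iff₀ l0 (by norm_num)]
    linarith
  have c1 : -1 / Real.log 2 ≤ -1.4426950 := by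
    rw [div_le_iff₀ l0]
    linarith
  have c2 : -1.4426951 ≤ -1 / Real.log 2 := by
    rw [le_div_iff₀ l0]
    linarith
  generalize SK (((69314719:ℕ):ℝ) / 100000000) = S1 at *
  generalize SK (((69314718:ℕ):ℝ) / 100000000) = S2 at *
  generalize (dG 59 : ℝ) = d at *
  have u1 : S1 * 1000000000 ≤ 391766010 := by
    have : d * (S1 * 1000000000) ≤ d * 391766010 := by linarith
    exact le_of_mul_le_mul_left this hd
  have u2 : 391765990 ≤ S2 * 1000000000 := by
    have : d * 391765990 ≤ d * (S2 * 1000000000) := by linarith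
    exact le_of_mul_le_mul_left this hd
  unfold GK
  constructor <;> linarith


/-! ### Part 3: the sieve -/

/-- Doubling construction of a periodic bit pattern. -/
def rep (q : ℕ) (base : ℕ) : ℕ → ℕ
  | 0 => base
  | i+1 => Nat.lor (rep q base i) (Nat.shiftLeft (rep q base i) (Nat.mul q (Nat.pow 2 i)))

theorem rep_testBit (q base i k : ℕ) :
    (rep q base i).testBit k = true ↔
      ∃ j, j < 2 ^ i ∧ q * j ≤ k ∧ base.testBit (k - q * j) = true := by
  induction i generalizing k with
  | zero => simp [rep]
  | succ i ih =>
    have h : rep q base (i+1) = (rep q base i) ||| ((rep q base i) <<< (q * 2 ^ i)) := rfl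
    rw [h, Nat.testBit_lor, Nat.testBit_shiftLeft]
    simp only [Bool.or_eq_true, Bool.and_eq_true, decide_eq_true_eq, ih]
    constructor
    · rintro (⟨j, hj, h1, h2⟩ | ⟨h0, j, hj, h1, h2⟩)
      · exact ⟨j, by rw [pow_succ]; omega, h1, h2⟩
      · refine ⟨2 ^ i + j, by rw [pow_succ]; omega, ?_, ?_⟩
        · rw [mul_add]; omega
        · rw [mul_add, ← Nat.sub_sub]; exact h2
    · rintro ⟨j, hj, h1, h2⟩
      by_cases hji : j < 2 ^ i
      · exact Or.inl ⟨j, hji, h1, h2⟩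
      · right
        obtain ⟨t, rfl⟩ := Nat.exists_eq_add_of_le (not_lt.mp hji)
        rw [mul_add] at h1 h2
        rw [← Nat.sub_sub] at h2
        rw [pow_succ] at hj
        exact ⟨by omega, t, by omega, by omega, h2⟩

/-- Bits `k` struck out by `q = 6r-1` and `q = 6r+1`. -/
def strike (i r : ℕ) : ℕ :=
  Nat.lor
    (rep (Nat.sub (Nat.mul 6 r) 1)
      (Nat.lor (Nat.pow 2 (Nat.sub (Nat.mul 5 r) 1)) (Nat.pow 2 (Nat.sub (Nat.mul 7 r) 1))) i)
    (rep (Nat.add (Nat.mul 6 r) 1)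
      (Nat.lor (Nat.pow 2 (Nat.add (Nat.mul 5 r) 1)) (Nat.pow 2 (Nat.add (Nat.mul 7 r) 1))) i)

theorem strike_testBit (i r k : ℕ) (hr : 1 ≤ r) : (strike i r).testBit k = true ↔
    ∃ j, j < 2 ^ i ∧ (k = (6*r-1)*j + (5*r-1) ∨ k = (6*r-1)*j + (7*r-1) ∨
      k = (6*r+1)*j + (5*r+1) ∨ k = (6*r+1)*j + (7*r+1)) := by
  have h : strike i r = (rep (6*r-1) (2^(5*r-1) ||| 2^(7*r-1)) i) |||
    (rep (6*r+1) (2^(5*r+1) ||| 2^(7*r+1)) i) := rfl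
  rw [h, Nat.testBit_lor]
  simp only [Bool.or_eq_true, rep_testBit, Nat.testBit_lor, Nat.testBit_two_pow, decide_eq_true_eq]
  constructor
  · rintro (⟨j, hj, h1, h2⟩ | ⟨j, hj, h1, h2⟩)
    · exact ⟨j, hj, by omega⟩
    · exact ⟨j, hj, by omega⟩
  · rintro ⟨j, hj, h1⟩
    rcases h1 with h1 | h1 | h1 | h1
    · exact Or.inl ⟨j, hj, by omega, by omega⟩
    · exact Or.inl ⟨j, hj, by omega, by omega⟩
    · exact Or.inr ⟨j, hj, by omega, by omega⟩
    · exact Or.inr ⟨j, hj, by omega, by omega⟩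

/-- Union of the strikes for `r0 ≤ r < r0 + n`. -/
def block (i r0 : ℕ) : ℕ → ℕ
  | 0 => 0
  | n+1 => Nat.lor (block i r0 n) (strike i (Nat.add r0 n))

theorem block_testBit (i r0 n k : ℕ) : (block i r0 n).testBit k = true ↔
    ∃ r, r0 ≤ r ∧ r < r0 + n ∧ (strike i r).testBit k = true := by
  induction n with
  | zero => simp [block]; intros; omega
  | succ n ih =>
    have h : block i r0 (n+1) = (block i r0 n) ||| (strike i (r0+n)) := rfl
    rw [h, Nat.testBit_lor, Bool.or_eq_true, ih]
    constructor
    · rintro (⟨r, h1, h2, h3⟩ | h3)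
      · exact ⟨r, h1, by omega, h3⟩
      · exact ⟨r0 + n, by omega, by omega, h3⟩
    · rintro ⟨r, h1, h2, h3⟩
      by_cases hr : r < r0 + n
      · exact Or.inl ⟨r, h1, hr, h3⟩
      · right
        have : r = r0 + n := by omega
        rwa [this] at h3

/-- All struck bits. -/
def struck : ℕ :=
  Nat.lor (block 16 1 1) (Nat.lor (block 15 2 2) (Nat.lor (block 14 4 4) (Nat.lor (block 13 8 8)
    (Nat.lor (block 12 16 16) (Nat.lor (block 11 32 32) (Nat.lor (block 10 64 64)
      (block 9 128 68)))))))

/-- Being struck, as a proposition. -/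
def Str (k : ℕ) : Prop := ∃ r j, 1 ≤ r ∧ (k = (6*r-1)*j + (5*r-1) ∨ k = (6*r-1)*j + (7*r-1) ∨
      k = (6*r+1)*j + (5*r+1) ∨ k = (6*r+1)*j + (7*r+1))

theorem struck_sound (k : ℕ) (h : struck.testBit k = true) : Str k := by
  have key : ∀ i r0 n, 1 ≤ r0 → (block i r0 n).testBit k = true → Str k := by
    intro i r0 n h0 hb
    obtain ⟨r, h1, h2, h3⟩ := (block_testBit _ _ _ _).1 hb
    obtain ⟨j, -, hj⟩ := (strike_testBit _ _ _ (by omega)).1 h3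
    exact ⟨r, j, by omega, hj⟩
  have e : struck = (block 16 1 1) ||| ((block 15 2 2) ||| ((block 14 4 4) ||| ((block 13 8 8) |||
    ((block 12 16 16) ||| ((block 11 32 32) ||| ((block 10 64 64) ||| (block 9 128 68))))))) := rfl
  rw [e] at h
  simp only [Nat.testBit_lor, Bool.or_eq_true] at h
  rcases h with h | h | h | h | h | h | h | h <;> exact key _ _ _ (by norm_num) h

theorem struck_complete (k r j : ℕ) (hk : k < 228233) (hr : 1 ≤ r) (hr' : r < 196)
    (h : k = (6*r-1)*j + (5*r-1) ∨ k = (6*r-1)*j + (7*r-1) ∨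
      k = (6*r+1)*j + (5*r+1) ∨ k = (6*r+1)*j + (7*r+1)) : struck.testBit k = true := by
  have key : ∀ i r0 n, r0 ≤ r → r < r0 + n → 228233 ≤ (6 * r0 - 1) * 2 ^ i →
      (block i r0 n).testBit k = true := by
    intro i r0 n h1 h2 h3
    refine (block_testBit _ _ _ _).2 ⟨r, h1, h2, (strike_testBit _ _ _ hr).2 ⟨j, ?_, h⟩⟩
    have h4 : (6 * r0 - 1) * j ≤ k := by
      have h5 : (6 * r0 - 1) * j ≤ (6*r-1)*j := Nat.mul_le_mul_right _ (by omega)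
      have h6 : (6 * r0 - 1) * j ≤ (6*r+1)*j := Nat.mul_le_mul_right _ (by omega)
      omega
    exact lt_of_mul_lt_mul_left (by omega : (6 * r0 - 1) * j < (6 * r0 - 1) * 2 ^ i) (Nat.zero_le _)
  have e : struck = (block 16 1 1) ||| ((block 15 2 2) ||| ((block 14 4 4) ||| ((block 13 8 8) |||
    ((block 12 16 16) ||| ((block 11 32 32) ||| ((block 10 64 64) ||| (block 9 128 68))))))) := rfl
  rw [e]
  simp only [Nat.testBit_lor, Bool.or_eq_true]
  by_cases c1 : r < 2
  · exact Or.inl (key _ _ _ (by omega) (by omega) (by norm_num))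
  right
  by_cases c2 : r < 4
  · exact Or.inl (key _ _ _ (by omega) (by omega) (by norm_num))
  right
  by_cases c3 : r < 8
  · exact Or.inl (key _ _ _ (by omega) (by omega) (by norm_num))
  right
  by_cases c4 : r < 16
  · exact Or.inl (key _ _ _ (by omega) (by omega) (by norm_num))
  right
  by_cases c5 : r < 32
  · exact Or.inl (key _ _ _ (by omega) (by omega) (by norm_num))
  right
  by_cases c6 : r < 64
  · exact Or.inl (key _ _ _ (by omega) (by omega) (by norm_num))
  right
  by_cases c7 : r < 128
  · exact Or.inl (key _ _ _ (by omega) (by omega) (by norm_num))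
  right
  exact key _ _ _ (by omega) (by omega) (by norm_num)

/-- `k` indexes a twin prime pair `(6k-1, 6k+1)`. -/
def Tw (k : ℕ) : Prop := (6*k-1).Prime ∧ (6*k+1).Prime

theorem not_tw_of_str (k : ℕ) (h : Str k) : ¬ Tw k := by
  rintro ⟨h1, h2⟩
  obtain ⟨r, j, hr, h⟩ := h
  obtain ⟨s, rfl⟩ := Nat.exists_eq_add_of_le hr
  rcases h with h | h | h | h
  · have e : 6 * k + 1 = (6*s+5) * (6*j+5) := by
      rw [h, show 6*(1+s)-1 = 6*s+5 by omega, show 5*(1+s)-1 = 5*s+4 by omega]; ring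
    rw [e] at h2
    exact Nat.not_prime_mul (by omega) (by omega) h2
  · have e : 6 * k - 1 = (6*s+5) * (6*j+7) := by
      rw [h, show 6*(1+s)-1 = 6*s+5 by omega, show 7*(1+s)-1 = 7*s+6 by omega]
      rw [Nat.sub_eq_iff_eq_add (by omega)]; ring
    rw [e] at h1
    exact Nat.not_prime_mul (by omega) (by omega) h1
  · have e : 6 * k - 1 = (6*s+7) * (6*j+5) := by
      rw [h, Nat.sub_eq_iff_eq_add (by omega)]; ring
    rw [e] at h1
    exact Nat.not_prime_mul (by omega) (by omega) h1
  · have e : 6 * k + 1 = (6*s+7) * (6*j+7) := by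
      rw [h]; ring
    rw [e] at h2
    exact Nat.not_prime_mul (by omega) (by omega) h2

theorem factor_shape (n : ℕ) (h2 : 2 ≤ n) (hm : n % 6 = 1 ∨ n % 6 = 5) (hp : ¬ n.Prime)
    (hlt : n < 1369398) :
    ∃ r t, 1 ≤ r ∧ r < 196 ∧ 1 ≤ t ∧ (n = (6*r-1)*(6*t-1) ∨ n = (6*r-1)*(6*t+1) ∨
      n = (6*r+1)*(6*t-1) ∨ n = (6*r+1)*(6*t+1)) := by
  have hq := Nat.minFac_prime (n := n) (by omega)
  have hsq := Nat.minFac_sq_le_self (n := n) (by omega) hp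
  obtain ⟨s, hs⟩ := Nat.minFac_dvd n
  set q := n.minFac with hqdef
  have hq171 : q < 1171 := by
    by_contra hc
    have : 1171 ^ 2 ≤ q ^ 2 := Nat.pow_le_pow_left (by omega) 2
    omega
  have hs1 : s ≠ 1 := by
    rintro rfl
    rw [mul_one] at hs
    exact hp (hs ▸ hq)
  have hs0 : s ≠ 0 := by
    rintro rfl
    omega
  have hqm : q % 6 = 1 ∨ q % 6 = 5 := by
    have : q % 6 < 6 := Nat.mod_lt _ (by norm_num)
    have hh : n % 6 = (q % 6) * (s % 6) % 6 := by conv_lhs => rw [hs, Nat.mul_mod]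
    have : s % 6 < 6 := Nat.mod_lt _ (by norm_num)
    generalize q % 6 = a at *
    generalize s % 6 = b at *
    interval_cases a <;> interval_cases b <;> omega
  have hsm : s % 6 = 1 ∨ s % 6 = 5 := by
    have : q % 6 < 6 := Nat.mod_lt _ (by norm_num)
    have hh : n % 6 = (q % 6) * (s % 6) % 6 := by conv_lhs => rw [hs, Nat.mul_mod]
    have : s % 6 < 6 := Nat.mod_lt _ (by norm_num)
    generalize q % 6 = a at *
    generalize s % 6 = b at *
    interval_cases a <;> interval_cases b <;> omega
  have hq2 := hq.two_le
  refine ⟨(q+1)/6, (s+1)/6, by omega, by omega, by omega, ?_⟩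
  rcases hqm with a | a <;> rcases hsm with b | b
  · right; right; right
    rw [show 6*((q+1)/6)+1 = q by omega, show 6*((s+1)/6)+1 = s by omega]; exact hs
  · right; right; left
    rw [show 6*((q+1)/6)+1 = q by omega, show 6*((s+1)/6)-1 = s by omega]; exact hs
  · right; left
    rw [show 6*((q+1)/6)-1 = q by omega, show 6*((s+1)/6)+1 = s by omega]; exact hs
  · left
    rw [show 6*((q+1)/6)-1 = q by omega, show 6*((s+1)/6)-1 = s by omega]; exact hs

theorem struck_iff (k : ℕ) (h1 : 1 ≤ k) (hk : k < 228233) :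
    struck.testBit k = true ↔ ¬ Tw k := by
  constructor
  · exact fun h => not_tw_of_str k (struck_sound k h)
  · intro h
    have key : ∀ n, (n = 6*k-1 ∨ n = 6*k+1) → ¬ n.Prime → struck.testBit k = true := by
      intro n hn hp
      obtain ⟨r, t, hr, hr', ht, hh⟩ := factor_shape n (by omega) (by omega) hp (by omega)
      obtain ⟨r, rfl⟩ := Nat.exists_eq_add_of_le hr
      obtain ⟨t, rfl⟩ := Nat.exists_eq_add_of_le ht
      refine struck_complete k (1+r) t hk hr hr' ?_
      rw [show 6*(1+r)-1 = 6*r+5 by omega, show 5*(1+r)-1 = 5*r+4 by omega,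
        show 7*(1+r)-1 = 7*r+6 by omega]
      rw [show 6*(1+r)-1 = 6*r+5 by omega, show 6*(1+t)-1 = 6*t+5 by omega] at hh
      ring_nf at hh ⊢
      omega
    by_cases c : (6*k-1).Prime
    · exact key (6*k+1) (Or.inr rfl) (fun c' => h ⟨c, c'⟩)
    · exact key (6*k-1) (Or.inl rfl) c

/-- Complement of a mask inside the lowest `N` bits. -/
def compl (N s : ℕ) : ℕ := Nat.xor (Nat.sub (Nat.pow 2 N) 1) (Nat.mod s (Nat.pow 2 N))

theorem compl_testBit (N s k : ℕ) (hk : k < N) :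
    (compl N s).testBit k = !(s.testBit k) := by
  have e : compl N s = (2 ^ N - 1) ^^^ (s % 2 ^ N) := rfl
  rw [e, Nat.testBit_xor, Nat.testBit_two_pow_sub_one, Nat.testBit_mod_two_pow]
  simp [hk]

/-- Survivor mask. -/
def surv : ℕ := compl 228233 struck

theorem surv_iff (k : ℕ) (h1 : 1 ≤ k) (hk : k < 228233) :
    surv.testBit k = true ↔ Tw k := by
  unfold surv
  rw [compl_testBit _ _ _ hk, ← not_iff_not, ← struck_iff k h1 hk]
  simp

/-- Number of set bits among the lowest `2^d`. -/
def pc : ℕ → ℕ → ℕ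
  | 0, s => Nat.mod s 2
  | d+1, s => Bool.rec
      (Nat.add (pc d (Nat.mod s (Nat.pow 2 (Nat.pow 2 d)))) (pc d (Nat.div s (Nat.pow 2 (Nat.pow 2 d)))))
      0 (Nat.beq s 0)

theorem pc_eq (d s : ℕ) :
    pc d s = ∑ i ∈ Finset.range (2 ^ d), if s.testBit i = true then 1 else 0 := by
  induction d generalizing s with
  | zero =>
    have : pc 0 s = s % 2 := rfl
    rw [this, pow_zero, Finset.sum_range_one, Nat.testBit_zero]
    rcases Nat.mod_two_eq_zero_or_one s with h | h <;> simp [h]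
  | succ d ih =>
    by_cases hs : s = 0
    · subst hs
      have : pc (d+1) 0 = 0 := rfl
      simp [this]
    · have hb : Nat.beq s 0 = false := by
        rw [← Bool.not_eq_true, Nat.beq_eq]; exact hs
      have : pc (d+1) s = pc d (s % 2 ^ (2 ^ d)) + pc d (s / 2 ^ (2 ^ d)) := by
        rw [pc, hb]; rfl
      rw [this, ih, ih, pow_succ, mul_two, Finset.sum_range_add]
      congr 1
      · apply Finset.sum_congr rfl
        intro i hi
        rw [Nat.testBit_mod_two_pow]
        simp [Finset.mem_range.1 hi]
      · apply Finset.sum_congr rfl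
        intro i hi
        rw [Nat.testBit_div_two_pow, add_comm]

open Classical in
/-- Number of twin indices in `[1, k)`. -/
noncomputable def A (k : ℕ) : ℕ := ((Finset.Ico 1 k).filter Tw).card

/-- Segment count. -/
def seg (d k len : ℕ) : ℕ := pc d (Nat.mod (Nat.shiftRight surv k) (Nat.pow 2 len))

theorem seg_eq (d k len : ℕ) (h1 : 1 ≤ k) (h2 : k + len ≤ 228233) (h3 : len ≤ 2 ^ d) :
    A (k + len) = A k + seg d k len := by
  classical
  have e : seg d k len = pc d ((surv >>> k) % 2 ^ len) := rfl
  rw [e, pc_eq]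
  have h4 : ∑ i ∈ Finset.range (2 ^ d), (if ((surv >>> k) % 2 ^ len).testBit i = true then 1 else 0)
      = ∑ i ∈ Finset.range len, (if Tw (k + i) then 1 else 0) := by
    symm
    rw [← Finset.sum_subset (s₁ := Finset.range len) (s₂ := Finset.range (2 ^ d))
      (f := fun i => if ((surv >>> k) % 2 ^ len).testBit i = true then 1 else 0)]
    · apply Finset.sum_congr rfl
      intro i hi
      have hi := Finset.mem_range.1 hi
      rw [Nat.testBit_mod_two_pow, Nat.testBit_shiftRight]
      simp [hi, surv_iff (k+i) (by omega) (by omega)]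
    · intro i; simp only [Finset.mem_range]; omega
    · intro i _ hi
      have hi : ¬ i < len := fun h => hi (Finset.mem_range.2 h)
      rw [Nat.testBit_mod_two_pow]
      simp [hi]
  rw [h4]
  unfold A
  rw [Finset.card_filter, Finset.card_filter, ← Finset.sum_Ico_consecutive _ h1 (Nat.le_add_right k len),
    Finset.sum_Ico_eq_sum_range _ k (k+len), Nat.add_sub_cancel_left]


/-! ### Part 4: assembly -/

/-- Certified lower bound `c < C2 * Li2 n`. -/
def check (n m w c : ℕ) : Bool :=
  Nat.ble 100000000 m && (expUB m n 1 && (expUB w m 100000000 &&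
    Nat.ble (Nat.add (Nat.add
      (Nat.mul (dG 59) (Nat.mul (Nat.mul c 100000) (Nat.mul 100000000 m)))
      (Nat.mul (dG 59) 1320320000000000000000)) 1)
      (Nat.mul 132032 (Nat.add (Nat.mul (pg m 59) (Nat.mul 100000000 m))
        (Nat.mul (dG 59) (Nat.mul (Nat.add w 141743800) m))))))

theorem check_sound (n m w c : ℕ) (h : check n m w c = true) (x : ℝ) (hx : (n:ℝ) ≤ x) :
    (c:ℝ) < C2 * Li2 x := by
  unfold check at h
  simp only [Bool.and_eq_true] at h
  obtain ⟨h1, h2, h3, h4⟩ := h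
  rw [Nat.ble_eq] at h1 h4
  have h4' : dG 59 * (c * 100000 * (100000000 * m)) + dG 59 * 1320320000000000000000 <
    132032 * (pg m 59 * (100000000 * m) + dG 59 * ((w + 141743800) * m)) := h4
  have h5 : (dG 59 : ℝ) * (c * 100000 * (100000000 * m)) + dG 59 * 1320320000000000000000 <
    132032 * (pg m 59 * (100000000 * m) + dG 59 * ((w + 141743800) * m)) := by exact_mod_cast h4'
  have hm : (100000000:ℝ) ≤ m := by exact_mod_cast h1
  have hm0 : 0 < m := lt_of_lt_of_le (by norm_num) h1
  have a1 := expUB_sound _ _ _ (by norm_num) h2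
  have a2 := expUB_sound _ _ _ (by norm_num) h3
  push_cast at a1 a2
  rw [div_one] at a1
  rw [pg_SK] at h5
  have hu1 : (1:ℝ) ≤ (m:ℝ) / 100000000 := by rw [le_div_iff₀ (by norm_num)]; linarith
  have hmu : (m:ℝ) = (m:ℝ) / 100000000 * 100000000 := by ring
  generalize (m:ℝ) / 100000000 = u at *
  rw [hmu] at h5
  have hu0 : 0 < u := by linarith
  have hwu : (w:ℝ) / 100000000 ≤ Real.log u := (Real.le_log_iff_exp_le hu0).2 a2
  have he2 : 2 ≤ Real.exp u := by linarith [Real.add_one_le_exp u]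
  have hL := Li2_lower he2
  rw [Real.log_exp] at hL
  have hL2 := Li2_mono he2 (le_trans a1 hx)
  have hd := dG_pos 59
  have hG := GK_log2_bounds.1
  have hC := C2_bounds.1
  have hlow : -1 / u + (w:ℝ) / 100000000 + SK u + 1.417438 ≤ Li2 x := by
    unfold GK at hL hG
    linarith
  generalize SK u = S at *
  generalize (dG 59 : ℝ) = d at *
  have h6 : (c * 100000 * (100000000 * (u * 100000000))) + 1320320000000000000000 <
      132032 * (S * (100000000 * (u * 100000000)) + (w + 141743800) * (u * 100000000)) := by
    refine lt_of_mul_lt_mul_left ?_ hd.le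
    linarith
  have hLi : 0 < Li2 x := Li2_pos (by
    have := Real.add_one_lt_exp (x := u) (by linarith)
    linarith)
  have h7 : (c:ℝ) < 1.32032 * (-1 / u + (w:ℝ) / 100000000 + S + 1.417438) := by
    have e : -1 / u + (w:ℝ) / 100000000 + S + 1.417438 =
      (-1 + (w:ℝ) / 100000000 * u + S * u + 1.417438 * u) / u := by field_simp
    rw [e, ← mul_div_assoc, lt_div_iff₀ hu0]
    linarith
  calc (c:ℝ) < 1.32032 * (-1 / u + (w:ℝ) / 100000000 + S + 1.417438) := h7
    _ ≤ 1.32032 * Li2 x := by linarith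
    _ ≤ C2 * Li2 x := mul_le_mul_of_nonneg_right hC hLi.le

theorem twin_shape (p : ℕ) (h1 : p.Prime) (h2 : (p+2).Prime) (h3 : p ≠ 3) : p % 6 = 5 := by
  have a1 : p ≠ 2 := by rintro rfl; revert h2; norm_num
  have b1 : ¬ 2 ∣ p := fun h => a1 ((Nat.prime_dvd_prime_iff_eq Nat.prime_two h1).1 h).symm
  have b2 : ¬ 3 ∣ p := fun h => h3 ((Nat.prime_dvd_prime_iff_eq Nat.prime_three h1).1 h).symm
  have b3 : ¬ 3 ∣ p + 2 := fun h => by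
    have := (Nat.prime_dvd_prime_iff_eq Nat.prime_three h2).1 h
    have := h1.two_le
    omega
  rw [Nat.dvd_iff_mod_eq_zero] at b1 b2 b3
  have hc : p % 6 = 0 ∨ p % 6 = 1 ∨ p % 6 = 2 ∨ p % 6 = 3 ∨ p % 6 = 4 ∨ p % 6 = 5 := by omega
  rcases hc with h | h | h | h | h | h <;> omega

theorem piTwin_le (k : ℕ) (x : ℝ) (hx : x < ((6*k+1 : ℕ) : ℝ)) : piTwin x ≤ 1 + A k := by
  classical
  unfold piTwin A
  rw [Nat.card_coe_set_eq]
  have hs : {p : ℕ | p.Prime ∧ (p + 2).Prime ∧ ((p : ℝ) + 2) ≤ x} ⊆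
      ((insert 3 (((Finset.Ico 1 k).filter Tw).image (fun j => 6*j-1)) : Finset ℕ) : Set ℕ) := by
    rintro p ⟨h1, h2, h3⟩
    rw [Finset.mem_coe, Finset.mem_insert]
    by_cases h : p = 3
    · exact Or.inl h
    right
    have hm := twin_shape p h1 h2 h
    have hlt : ((p+2 : ℕ) : ℝ) < ((6*k+1 : ℕ) : ℝ) := by push_cast at *; linarith
    have hlt' : p + 2 < 6*k+1 := by exact_mod_cast hlt
    rw [Finset.mem_image]
    refine ⟨(p+1)/6, ?_, by omega⟩
    rw [Finset.mem_filter, Finset.mem_Ico]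
    refine ⟨by omega, ?_, ?_⟩
    · rw [show 6*((p+1)/6)-1 = p by omega]; exact h1
    · rw [show 6*((p+1)/6)+1 = p+2 by omega]; exact h2
  refine le_trans (Set.ncard_le_ncard hs (Finset.finite_toSet _)) ?_
  rw [Set.ncard_coe_finset]
  refine le_trans (Finset.card_insert_le _ _) ?_
  rw [add_comm]
  exact Nat.add_le_add_left Finset.card_image_le 1

theorem piTwin_ge (k : ℕ) (hk : 1 ≤ k) (x : ℝ) (hx : ((6*k+1 : ℕ) : ℝ) ≤ x) :
    1 + A (k+1) ≤ piTwin x := by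
  classical
  unfold piTwin A
  rw [Nat.card_coe_set_eq]
  have hs : ((insert 3 (((Finset.Ico 1 (k+1)).filter Tw).image (fun j => 6*j-1)) : Finset ℕ) : Set ℕ)
      ⊆ {p : ℕ | p.Prime ∧ (p + 2).Prime ∧ ((p : ℝ) + 2) ≤ x} := by
    intro p hp
    rw [Finset.mem_coe, Finset.mem_insert, Finset.mem_image] at hp
    rcases hp with rfl | ⟨j, hj, rfl⟩
    · refine ⟨by norm_num, by norm_num, ?_⟩
      have : (1:ℝ) ≤ k := by exact_mod_cast hk
      push_cast at *
      linarith
    · rw [Finset.mem_filter, Finset.mem_Ico] at hj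
      obtain ⟨⟨h1, h2⟩, h3, h4⟩ := hj
      have e : 6*j-1+2 = 6*j+1 := by omega
      refine ⟨h3, by rw [e]; exact h4, ?_⟩
      have : ((6*j-1+2 : ℕ) : ℝ) ≤ ((6*k+1 : ℕ) : ℝ) := by
        exact_mod_cast (by omega : 6*j-1+2 ≤ 6*k+1)
      refine le_trans ?_ hx
      rw [Nat.cast_add, Nat.cast_ofNat] at this
      exact this
  have hfin : {p : ℕ | p.Prime ∧ (p + 2).Prime ∧ ((p : ℝ) + 2) ≤ x}.Finite := by
    apply (Set.finite_Iic ⌊x⌋₊).subset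
    rintro p ⟨-, -, h3⟩
    exact Nat.le_floor (by linarith)
  refine le_trans ?_ (Set.ncard_le_ncard hs hfin)
  rw [Set.ncard_coe_finset, Finset.card_insert_of_notMem, Finset.card_image_of_injOn, add_comm]
  · intro a ha b hb hab
    simp only [Finset.coe_filter, Finset.mem_Ico, Set.mem_ofPred_eq] at ha hb hab
    omega
  · rw [Finset.mem_image]
    rintro ⟨j, -, h⟩
    omega

/-- Verification of the chain of certificates. -/
def run : List (ℕ × ℕ × ℕ × ℕ) → ℕ → ℕ → ℕ → Bool
  | [], n, k, c => Nat.beq k 228232 && (Nat.beq c 10742 && Nat.ble 1369393 n)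
  | (m, w, k', c') :: t, n, k, c =>
    check n m (Nat.mul w 10000) (Nat.add 1 c') && (Nat.ble k k' && (Nat.ble k' 228232 &&
      (Nat.beq c' (Nat.add c (seg 18 k (Nat.sub k' k))) && run t (Nat.add (Nat.mul 6 k') 1) k' c')))

theorem run_sound (l : List (ℕ × ℕ × ℕ × ℕ)) : ∀ (n k c : ℕ), run l n k c = true → 1 ≤ k →
    A k = c → (∀ x : ℝ, (n:ℝ) ≤ x → x < 1369393 → (piTwin x : ℝ) < C2 * Li2 x) ∧
      A 228232 = 10742 := by
  induction l with
  | nil =>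
    intro n k c h hk hA
    simp only [run, Bool.and_eq_true, Nat.beq_eq, Nat.ble_eq] at h
    obtain ⟨rfl, rfl, h3⟩ := h
    refine ⟨fun x h1 h2 => ?_, hA⟩
    have : ((1369393:ℕ):ℝ) ≤ n := by exact_mod_cast h3
    push_cast at this
    linarith
  | cons a t ih =>
    obtain ⟨m, w, k', c'⟩ := a
    intro n k c h hk hA
    rw [run] at h
    simp only [Bool.and_eq_true] at h
    obtain ⟨h1, h2, h3, h4, h5⟩ := h
    rw [Nat.ble_eq] at h2 h3
    rw [Nat.beq_eq] at h4
    have h4' : c' = c + seg 18 k (k' - k) := h4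
    have hs := seg_eq 18 k (k' - k) hk (by omega) (by
      have : (2:ℕ)^18 = 262144 := by norm_num
      omega)
    rw [Nat.add_sub_cancel' h2, hA, ← h4'] at hs
    obtain ⟨i1, i2⟩ := ih _ _ _ h5 (by omega) hs
    refine ⟨fun x hx hx' => ?_, i2⟩
    by_cases hc : ((6*k'+1 : ℕ) : ℝ) ≤ x
    · exact i1 x hc hx'
    · have e := piTwin_le k' x (not_le.1 hc)
      rw [hs] at e
      have e' : (piTwin x : ℝ) ≤ ((1 + c' : ℕ) : ℝ) := by exact_mod_cast e
      exact lt_of_le_of_lt e' (check_sound _ _ _ _ h1 x hx)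

theorem A_three : A 3 ≤ 2 := by
  classical
  unfold A
  exact le_trans (Finset.card_filter_le _ _) (by simp)

theorem A_six : A 6 = 4 := by
  classical
  unfold A
  have e : Finset.Ico 1 6 = {1, 2, 3, 4, 5} := by decide
  rw [e]
  have t1 : Tw 1 := ⟨by norm_num, by norm_num⟩
  have t2 : Tw 2 := ⟨by norm_num, by norm_num⟩
  have t3 : Tw 3 := ⟨by norm_num, by norm_num⟩
  have t4 : ¬ Tw 4 := fun h => absurd h.2 (by norm_num)
  have t5 : Tw 5 := ⟨by norm_num, by norm_num⟩
  simp only [Finset.filter_insert, Finset.filter_singleton, t1, t2, t3, t4, t5, if_true, if_false]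
  rfl

theorem prime_a : Nat.Prime 1369391 := by norm_num
theorem prime_b : Nat.Prime 1369393 := by norm_num

theorem A_last (h : A 228232 = 10742) : A 228233 = 10743 := by
  classical
  have t : Tw 228232 := ⟨by simpa using prime_a, by simpa using prime_b⟩
  unfold A at *
  have e : Finset.Ico 1 228233 = insert 228232 (Finset.Ico 1 228232) := by
    ext i; simp only [Finset.mem_Ico, Finset.mem_insert]; omega
  rw [e, Finset.filter_insert, if_pos t, Finset.card_insert_of_notMem (by simp), h]

theorem cert_five : check 5 160943780 47580000 3 = true := by decide +kernel
theorem cert_U : expLB 1412987815 1369393 1 = true := by decide +kernel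
theorem cert_W : expLB 264840000 1412987815 100000000 = true := by decide +kernel
theorem cert_SU : pg 1412987815 59 * 100000 ≤ dG 59 * 813302554 := by decide +kernel

theorem final_upper : C2 * Li2 1369393 < 10744 := by
  have a1 := expLB_sound _ _ _ (by norm_num) cert_U
  have a2 := expLB_sound _ _ _ (by norm_num) cert_W
  push_cast at a1 a2
  have l1 : Real.log 1369393 ≤ 1412987815 / 100000000 := by
    rw [Real.log_le_iff_le_exp (by norm_num)]; linarith
  have l2 : Real.log (1412987815 / 100000000) ≤ 264840000 / 100000000 := by
    rw [Real.log_le_iff_le_exp (by norm_num)]; exact a2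
  have l0 : 0 < Real.log 1369393 := Real.log_pos (by norm_num)
  have hU := Li2_upper (b := 1369393) (by norm_num) (by linarith)
  have hd := dG_pos 59
  have s1 : (pg 1412987815 59 : ℝ) * 100000 ≤ dG 59 * 813302554 := by exact_mod_cast cert_SU
  rw [pg_SK] at s1
  have s2 : SK (((1412987815:ℕ):ℝ) / 100000000) * 100000 ≤ 813302554 := by
    refine le_of_mul_le_mul_left ?_ hd
    linarith
  push_cast at s2
  have s3 := SK_mono l0.le l1
  have s4 : Real.log (Real.log 1369393) ≤ Real.log (1412987815 / 100000000) :=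
    Real.log_le_log l0 l1
  have s5 : -1 / Real.log 1369393 ≤ -0.0707 := by
    rw [div_le_iff₀ l0]; linarith
  have hG := GK_log2_bounds.2
  have hC := C2_bounds.2
  have hp : 0 < Li2 1369393 := Li2_pos (by norm_num)
  have hGK : GK (Real.log 1369393) ≤ -0.0707 + 2.6484 + 813302554 / 100000 := by
    unfold GK; linarith
  have h1 : C2 * Li2 1369393 ≤ 1.32033 * Li2 1369393 := mul_le_mul_of_nonneg_right hC hp.le
  have h2 : Li2 1369393 ≤ 8137.2 := by
    norm_num at hU hGK
    linarith
  linarith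


/-- The certificates. -/
def certs : List (ℕ × ℕ × ℕ × ℕ) := [
  (294443895, 10799, 10, 5), (411087384, 14136, 23, 9), (493447391, 15962, 38, 14),
  (543372198, 16926, 58, 19), (585507190, 17673, 95, 24), (634738918, 18480, 138, 31),
  (672022013, 19051, 192, 39), (705012250, 19530, 248, 48), (730586001, 19886, 322, 57),
  (756682845, 20237, 385, 68), (774543559, 20471, 455, 76), (791242310, 20684, 550, 85),
  (810198071, 20921, 628, 97), (823456497, 21083, 688, 106), (832579050, 21193, 723, 113),
  (837539916, 21252, 758, 117), (842266268, 21309, 798, 121), (847407688, 21370, 835, 125),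
  (851939075, 21423, 903, 130), (859766655, 21514, 943, 137), (864100245, 21565, 980, 141),
  (867948207, 21609, 1045, 145), (874369109, 21683, 1115, 152), (880851859, 21757, 1158, 159),
  (884635302, 21800, 1218, 163), (889686172, 21856, 1260, 169), (893075871, 21895, 1335, 174),
  (898857085, 21959, 1423, 181), (905239916, 22030, 1507, 190), (910974623, 22093, 1605, 198),
  (917274232, 22162, 1682, 207), (921959737, 22213, 1750, 214), (925922574, 22256, 1843, 220),
  (931099983, 22311, 1953, 229), (936896671, 22374, 2042, 239), (941352606, 22421, 2203, 247),
  (948941044, 22501, 2347, 261), (955272365, 22568, 2555, 274), (963763218, 22656, 2782, 292),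
  (972274472, 22744, 2987, 311), (979384006, 22817, 3197, 328), (986177972, 22886, 3407, 345),
  (992539578, 22950, 3582, 362), (997548255, 23001, 3713, 376), (1001139978, 23037, 3838, 387),
  (1004450955, 23070, 3945, 396), (1007200592, 23097, 4153, 405), (1012338582, 23148, 4377, 421),
  (1017591636, 23200, 4597, 438), (1022495489, 23248, 4777, 455), (1026336235, 23285, 5045, 469),
  (1031794541, 23338, 5308, 489), (1036876124, 23387, 5495, 508), (1040338364, 23421, 5672, 522),
  (1043508590, 23451, 5807, 535), (1045860751, 23474, 5955, 545), (1048377391, 23498, 6132, 555),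
  (1051306286, 23526, 6302, 568), (1054040821, 23552, 6487, 580), (1056934059, 23579, 6738, 593),
  (1060730260, 23615, 7012, 611), (1064716146, 23652, 7298, 630), (1068713790, 23690, 7637, 650),
  (1073254140, 23732, 8020, 674), (1078147393, 23778, 8298, 700), (1081554933, 23809, 8570, 719),
  (1084780190, 23839, 8862, 737), (1088130600, 23870, 9223, 757), (1092123316, 23907, 9545, 781),
  (1095554964, 23938, 9868, 802), (1098882881, 23968, 10245, 823), (1102632077, 24002, 10763, 848),
  (1107564453, 24047, 11293, 881), (1112371255, 24090, 11820, 916), (1116932184, 24131, 12367, 949),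
  (1121455983, 24172, 12948, 984), (1126046893, 24212, 13507, 1020), (1130273513, 24250, 14053, 1055),
  (1134236248, 24285, 14585, 1089), (1137951975, 24318, 15088, 1121), (1141342550, 24347, 15582, 1152),
  (1144564182, 24376, 16055, 1182), (1147554543, 24402, 16478, 1211), (1150155100, 24424, 16958, 1236),
  (1153026425, 24449, 17397, 1265), (1155582208, 24471, 17845, 1291), (1158124742, 24493, 18307, 1317),
  (1160680733, 24515, 18820, 1344), (1163444371, 24539, 19310, 1375), (1166014645, 24561, 19702, 1403),
  (1168024334, 24578, 20123, 1426), (1170138645, 24597, 20433, 1450), (1171667412, 24610, 20795, 1468),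
  (1173423531, 24625, 21268, 1489), (1175672616, 24644, 21700, 1516), (1177683466, 24661, 22127, 1541),
  (1179632084, 24677, 22565, 1565), (1181592214, 24694, 22985, 1590), (1183436380, 24710, 23473, 1614),
  (1185537265, 24727, 24012, 1642), (1187807537, 24746, 24612, 1672), (1190275562, 24767, 25128, 1706),
  (1192350412, 24785, 25490, 1734), (1193780748, 24797, 25847, 1754), (1195171571, 24808, 26205, 1774),
  (1196547132, 24820, 26605, 1794), (1198062016, 24832, 26957, 1816), (1199376391, 24843, 27332, 1836),
  (1200757900, 24855, 27790, 1856), (1202419696, 24869, 28350, 1881), (1204414763, 24885, 29013, 1912),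
  (1206726447, 24904, 29613, 1948), (1208773381, 24921, 30125, 1981), (1210487565, 24936, 30452, 2008),
  (1211567187, 24944, 30775, 2026), (1212622281, 24953, 31080, 2044), (1213608461, 24961, 31477, 2060),
  (1214877714, 24972, 31883, 2081), (1216159290, 24982, 32230, 2103), (1217241759, 24991, 32695, 2122),
  (1218674198, 25003, 33138, 2146), (1220020041, 25014, 33637, 2170), (1221514633, 25026, 34073, 2197),
  (1222802490, 25037, 34540, 2220), (1224163762, 25048, 34878, 2244), (1225137576, 25056, 35203, 2262),
  (1226065076, 25063, 35668, 2279), (1227377332, 25074, 36228, 2304), (1228935162, 25087, 36817, 2333),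
  (1230547895, 25100, 37293, 2364), (1231832483, 25110, 37803, 2389), (1233190760, 25121, 38295, 2416),
  (1234483841, 25132, 38698, 2441), (1235530695, 25140, 39090, 2462), (1236538567, 25149, 39512, 2483),
  (1237612336, 25157, 40043, 2504), (1238947276, 25168, 40703, 2532), (1240582062, 25181, 41268, 2566),
  (1241960614, 25192, 41867, 2595), (1243401663, 25204, 42578, 2626), (1245085633, 25217, 43335, 2662),
  (1246847919, 25232, 44138, 2701), (1248683959, 25246, 44793, 2741), (1250157032, 25258, 45453, 2775),
  (1251619722, 25270, 46137, 2808), (1253113357, 25282, 46905, 2843), (1254764256, 25295, 47483, 2881),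
  (1255988999, 25305, 48155, 2910), (1257394316, 25316, 48877, 2944), (1258882507, 25328, 49780, 2980),
  (1260713137, 25342, 50603, 3025), (1262352888, 25355, 51415, 3066), (1263944792, 25368, 52140, 3107),
  (1265345033, 25379, 52915, 3143), (1266820473, 25390, 53552, 3181), (1268017098, 25400, 54050, 3212),
  (1268942735, 25407, 54435, 3237), (1269652511, 25413, 54722, 3256), (1270178359, 25417, 54938, 3270),
  (1270572303, 25420, 55120, 3280), (1270903037, 25423, 55307, 3289), (1271241722, 25425, 55498, 3298),
  (1271586471, 25428, 55738, 3308), (1272017985, 25431, 56042, 3320), (1272561911, 25436, 56360, 3334),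
  (1273127737, 25440, 56822, 3350), (1273944123, 25447, 57295, 3373), (1274773099, 25453, 57778, 3396),
  (1275612569, 25460, 58305, 3419), (1276520543, 25467, 58858, 3445), (1277464532, 25474, 59407, 3472),
  (1278392959, 25481, 59903, 3498), (1279224409, 25488, 60405, 3522), (1280058937, 25494, 60958, 3547),
  (1280970256, 25502, 61737, 3573), (1282240085, 25511, 62547, 3611), (1283543566, 25522, 63478, 3650),
  (1285021074, 25533, 64397, 3695), (1286458436, 25544, 65352, 3739), (1287930532, 25556, 66287, 3784),
  (1289351104, 25567, 67258, 3829), (1290805317, 25578, 68215, 3875), (1292218165, 25589, 69185, 3921),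
  (1293630121, 25600, 70135, 3967), (1294993906, 25610, 71015, 4011), (1296240819, 25620, 71668, 4053),
  (1297156139, 25627, 72335, 4084), (1298082513, 25634, 73138, 4115), (1299186507, 25643, 73980, 4153),
  (1300331176, 25652, 74998, 4192), (1301697839, 25662, 75933, 4240), (1302936829, 25672, 77095, 4284),
  (1304455531, 25683, 78383, 4338), (1306112392, 25696, 79628, 4398), (1307688261, 25708, 81107, 4455),
  (1309528605, 25722, 82420, 4524), (1311134487, 25734, 83897, 4584), (1312910657, 25748, 85470, 4652),
  (1314768211, 25762, 86923, 4725), (1316453931, 25775, 88162, 4791), (1317869264, 25786, 89478, 4848),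
  (1319350937, 25797, 90683, 4908), (1320688647, 25807, 92005, 4962), (1322135946, 25818, 93415, 5022),
  (1323656844, 25829, 94930, 5086), (1325265626, 25841, 96233, 5155), (1326628879, 25852, 97412, 5213),
  (1327846584, 25861, 98625, 5266), (1329084119, 25870, 99748, 5321), (1330216340, 25879, 100933, 5371),
  (1331397330, 25888, 102053, 5424), (1332500864, 25896, 103213, 5474), (1333631115, 25904, 104437, 5526),
  (1334810034, 25913, 105577, 5580), (1335895685, 25921, 106692, 5631), (1336946246, 25929, 107762, 5680),
  (1337944136, 25937, 108790, 5728), (1338893567, 25944, 109945, 5773), (1339949648, 25952, 110852, 5824),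
  (1340771221, 25958, 111757, 5864), (1341584309, 25964, 112810, 5904), (1342522119, 25971, 113783, 5951),
  (1343380931, 25977, 115082, 5993), (1344516109, 25986, 116288, 6050), (1345558603, 25993, 117630, 6103),
  (1346706025, 26002, 118933, 6162), (1347807643, 26010, 120543, 6219), (1349152264, 26020, 122183, 6289),
  (1350503601, 26030, 123783, 6360), (1351804610, 26040, 125573, 6429), (1353240331, 26050, 127507, 6507),
  (1354768730, 26062, 129370, 6591), (1356219253, 26072, 131148, 6671), (1357584245, 26082, 132885, 6747),
  (1358900007, 26092, 134900, 6822), (1360404972, 26103, 137027, 6908), (1361969393, 26115, 138863, 6999),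
  (1363300376, 26124, 140647, 7078), (1364576911, 26134, 142835, 7154), (1366120601, 26145, 144895, 7247),
  (1367552522, 26156, 146788, 7334), (1368850523, 26165, 148563, 7414), (1370052496, 26174, 150433, 7489),
  (1371303363, 26183, 152365, 7568), (1372579478, 26192, 154007, 7649), (1373651386, 26200, 155815, 7718),
  (1374818520, 26209, 157622, 7794), (1375971554, 26217, 159572, 7870), (1377201100, 26226, 161373, 7951),
  (1378323421, 26234, 163058, 8026), (1379362171, 26242, 164913, 8097), (1380493380, 26250, 166778, 8174),
  (1381617931, 26258, 168332, 8251), (1382545393, 26265, 169892, 8316), (1383467865, 26271, 171293, 8380),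
  (1384289124, 26277, 172627, 8438), (1385064889, 26283, 173973, 8493), (1385841580, 26288, 175168, 8549),
  (1386526119, 26293, 176468, 8598), (1387265522, 26299, 177958, 8652), (1388106323, 26305, 179195, 8713),
  (1388799025, 26310, 180397, 8764), (1389467562, 26315, 181737, 8813), (1390207623, 26320, 182725, 8868),
  (1390749793, 26324, 183788, 8909), (1391329855, 26328, 184782, 8952), (1391869238, 26332, 185838, 8993),
  (1392439095, 26336, 186758, 9036), (1392932928, 26339, 187778, 9073), (1393477602, 26343, 188647, 9115),
  (1393939315, 26347, 189527, 9151), (1394404710, 26350, 190255, 9186), (1394788088, 26353, 190983, 9216),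
  (1395170001, 26356, 191790, 9246), (1395591662, 26359, 192637, 9279), (1396032318, 26362, 193408, 9313),
  (1396431753, 26365, 194175, 9344), (1396827540, 26367, 194835, 9375), (1397166863, 26370, 195590, 9402),
  (1397553621, 26373, 196360, 9433), (1397946528, 26375, 197047, 9464), (1398295785, 26378, 197610, 9492),
  (1398581096, 26380, 198060, 9515), (1398808558, 26382, 198492, 9533), (1399026436, 26383, 198973, 9550),
  (1399268470, 26385, 199400, 9570), (1399482842, 26386, 199727, 9587), (1399646699, 26388, 200097, 9600),
  (1399831781, 26389, 200560, 9615), (1400062901, 26391, 201187, 9634), (1400375038, 26393, 201847, 9659),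
  (1400702553, 26395, 202653, 9686), (1401101070, 26398, 203593, 9719), (1401563844, 26401, 204417, 9757),
  (1401967756, 26404, 205175, 9790), (1402337881, 26407, 205807, 9820), (1402645437, 26409, 206500, 9846),
  (1402981594, 26411, 207232, 9874), (1403335447, 26414, 207750, 9903), (1403585096, 26416, 208227, 9924),
  (1403814435, 26417, 208703, 9943), (1404042771, 26419, 209305, 9962), (1404330804, 26421, 209842, 9986),
  (1404587038, 26423, 210437, 10008), (1404870184, 26425, 210880, 10032), (1405080476, 26426, 211298, 10050),
  (1405278497, 26428, 211810, 10066), (1405520516, 26429, 212235, 10087), (1405720966, 26431, 212840, 10104),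
  (1406005622, 26433, 213498, 10128), (1406314297, 26435, 214252, 10155), (1406666839, 26438, 214937, 10185),
  (1406986046, 26440, 215673, 10212), (1407327887, 26442, 216485, 10242), (1407703675, 26445, 217278, 10274),
  (1408069313, 26448, 218087, 10306), (1408440955, 26450, 218778, 10338), (1408757300, 26452, 219457, 10366),
  (1409067180, 26455, 220155, 10393), (1409384732, 26457, 220752, 10421), (1409655538, 26459, 221455, 10444),
  (1409973488, 26461, 222190, 10472), (1410304835, 26463, 222938, 10502), (1410640918, 26466, 223582, 10532),
  (1410929371, 26468, 224067, 10557), (1411146058, 26469, 224360, 10576), (1411276737, 26470, 224730, 10588),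
  (1411441515, 26471, 225057, 10603), (1411586917, 26472, 225257, 10616), (1411675744, 26473, 225395, 10624),
  (1411736988, 26474, 225515, 10629), (1411790214, 26474, 225670, 10634), (1411858922, 26474, 225775, 10640),
  (1411905439, 26475, 225878, 10644), (1411951049, 26475, 225908, 10648), (1411964330, 26475, 225957, 10650),
  (1411986018, 26475, 226013, 10652), (1412010798, 26475, 226077, 10654), (1412039111, 26476, 226145, 10656),
  (1412069185, 26476, 226177, 10659), (1412083334, 26476, 226238, 10660), (1412110300, 26476, 226383, 10663),
  (1412174371, 26477, 226530, 10669), (1412239285, 26477, 226678, 10674), (1412304597, 26478, 226798, 10680),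
  (1412357521, 26478, 226957, 10685), (1412427603, 26478, 227068, 10691), (1412476499, 26479, 227127, 10696),
  (1412502479, 26479, 227222, 10698), (1412544297, 26479, 227367, 10702), (1412608091, 26480, 227518, 10708),
  (1412674481, 26480, 227670, 10714), (1412741267, 26481, 227843, 10720), (1412817225, 26481, 228013, 10727),
  (1412891810, 26482, 228078, 10733), (1412920313, 26482, 228132, 10736), (1412943986, 26482, 228170, 10738),
  (1412960642, 26482, 228203, 10740), (1412975104, 26482, 228223, 10741), (1412983867, 26482, 228232, 10742)]

theorem certs_ok : run certs 19 6 4 = true := by decide +kernel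


/-- The first sign change of `d₂(x) = π₂(x) − C₂·Li₂(x)` occurs at the twin prime pair
`(1369391, 1369393)`: both numbers are prime, `π₂(x) < C₂·Li₂(x)` for all real
`2 < x < 1369393`, and `π₂(1369393) > C₂·Li₂(1369393)`. -/
theorem first_sign_change_of_d2 :
    Nat.Prime 1369391 ∧ Nat.Prime 1369393 ∧
    (∀ x : ℝ, 2 < x → x < 1369393 → (piTwin x : ℝ) < C2 * Li2 x) ∧
    (piTwin 1369393 : ℝ) > C2 * Li2 1369393 := by
  obtain ⟨r1, r2⟩ := run_sound certs 19 6 4 certs_ok (by norm_num) A_six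
  refine ⟨prime_a, prime_b, ?_, ?_⟩
  · intro x h1 h2
    by_cases c1 : (19:ℝ) ≤ x
    · exact r1 x (by push_cast; exact c1) h2
    by_cases c2 : (5:ℝ) ≤ x
    · have e := piTwin_le 3 x (by push_cast; linarith)
      have e' : piTwin x ≤ 3 := le_trans e (by have := A_three; omega)
      have e'' : (piTwin x : ℝ) ≤ ((3:ℕ):ℝ) := by exact_mod_cast e'
      exact lt_of_le_of_lt e'' (check_sound _ _ _ _ cert_five x (by push_cast; exact c2))
    · have hz : piTwin x = 0 := by
        unfold piTwin
        have : {p : ℕ | p.Prime ∧ (p + 2).Prime ∧ ((p : ℝ) + 2) ≤ x} = ∅ := by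
          rw [Set.eq_empty_iff_forall_notMem]
          rintro p ⟨a1, a2, a3⟩
          have : (p:ℝ) < ((3:ℕ):ℝ) := by push_cast; linarith
          have hp : p < 3 := by exact_mod_cast this
          have hp2 := a1.two_le
          have : p = 2 := by omega
          subst this
          revert a2
          norm_num
        rw [this]
        simp
      rw [hz]
      have := C2_bounds.1
      have hC : 0 < C2 := by linarith
      have := mul_pos hC (Li2_pos h1)
      simpa using this
  · have h := piTwin_ge 228232 (by norm_num) 1369393 (by norm_num)
    rw [A_last r2] at h
    have h' : ((10744:ℕ):ℝ) ≤ (piTwin 1369393 : ℝ) := by exact_mod_cast h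
    push_cast at h'
    exact lt_of_lt_of_le final_upper h'
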